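/- (Claim 4: strong converse for the three-receiver BC, proving Theorem 6.) For every rate triple (R₁, R₂, R₃) ∈ [0,∞)³, all positive constants λ₁^{(k)}, λ₂^{(k)} (k = 1,2,3) satisfying Σ_{k=1}^3 (λ₁^{(k)} + λ₂^{(k)}) < 1, and every ε > 0, there exists η₀ ∈ ℕ such that for every blocklength n ≥ η₀ and all finite sets ℳ_k with |ℳ_k| = ⌈exp(exp(n R_k))⌉ (k = 1,2,3), a necessary condition for an (n, {ℳ_k, λ₁^{(k)}, λ₂^{(k)}}_{k∈{1,2,3}}) average-error ID code for the three-receiver BC W(y₁,y₂,y₃|x) to exist is that for some PMF P on 𝒳, R_k < I(P, W_k) + ε for all k ∈ {1,2,3}. -/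

import Mathlib

open scoped Classical
open Finset

noncomputable section

/-- `P` is a probability mass function on the finite type `X`. -/
def IsPMF {X : Type*} [Fintype X] (P : X → ℝ) : Prop :=
  (∀ x, 0 ≤ P x) ∧ ∑ x, P x = 1

/-- `W` is a (discrete memoryless) channel from `X` to `Y`. -/
def IsChannel {X Y : Type*} [Fintype Y] (W : X → Y → ℝ) : Prop :=
  (∀ x y, 0 ≤ W x y) ∧ ∀ x, ∑ y, W x y = 1

/-- The `n`-fold memoryless extension `W^n(𝐲|𝐱) = ∏ᵢ W(yᵢ|xᵢ)`. -/
def Wn {X Y : Type*} (W : X → Y → ℝ) (n : ℕ) (x : Fin n → X) (y : Fin n → Y) : ℝ :=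
  ∏ i, W (x i) (y i)

/-- Mutual information `I(P,W)` (natural logarithm), with the convention that
terms with `P x * W x y = 0` contribute `0`. -/
def mutInf {X Y : Type*} [Fintype X] [Fintype Y] (P : X → ℝ) (W : X → Y → ℝ) : ℝ :=
  ∑ x, ∑ y, if P x * W x y = 0 then 0
    else P x * W x y * Real.log (W x y / ∑ x', P x' * W x' y)

/-- The error requirements of an `(n, M, l1, l2)` ID code for the DMC `W`:
maximum probability of missed identification at most `l1`, maximum probability
of wrong identification at most `l2`. -/
def IDCodeErr {X Y M : Type*} [Fintype X] [Fintype Y]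
    (n : ℕ) (W : X → Y → ℝ) (Q : M → (Fin n → X) → ℝ)
    (D : M → Finset (Fin n → Y)) (l1 l2 : ℝ) : Prop :=
  (∀ m, ∑ x, Q m x * ∑ y ∈ (D m)ᶜ, Wn W n x y ≤ l1) ∧
  (∀ m m', m ≠ m' → ∑ x, Q m x * ∑ y ∈ D m', Wn W n x y ≤ l2)

/-- `(n, M, l1, l2)` ID code for the DMC `W`. -/
def IsIDCode {X Y M : Type*} [Fintype X] [Fintype Y]
    (n : ℕ) (W : X → Y → ℝ) (Q : M → (Fin n → X) → ℝ)
    (D : M → Finset (Fin n → Y)) (l1 l2 : ℝ) : Prop :=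
  (∀ m, IsPMF (Q m)) ∧ IDCodeErr n W Q D l1 l2

/-- `W` is a three-receiver broadcast channel from `X` to `Y1 × Y2 × Y3`. -/
def IsBC3 {X Y1 Y2 Y3 : Type*} [Fintype Y1] [Fintype Y2] [Fintype Y3]
    (W : X → Y1 → Y2 → Y3 → ℝ) : Prop :=
  (∀ x y1 y2 y3, 0 ≤ W x y1 y2 y3) ∧ ∀ x, ∑ y1, ∑ y2, ∑ y3, W x y1 y2 y3 = 1

/-- Marginal channel to receiver 1. -/
def marg1 {X Y1 Y2 Y3 : Type*} [Fintype Y2] [Fintype Y3]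
    (W : X → Y1 → Y2 → Y3 → ℝ) : X → Y1 → ℝ :=
  fun x y1 => ∑ y2, ∑ y3, W x y1 y2 y3

/-- Marginal channel to receiver 2. -/
def marg2 {X Y1 Y2 Y3 : Type*} [Fintype Y1] [Fintype Y3]
    (W : X → Y1 → Y2 → Y3 → ℝ) : X → Y2 → ℝ :=
  fun x y2 => ∑ y1, ∑ y3, W x y1 y2 y3

/-- Marginal channel to receiver 3. -/
def marg3 {X Y1 Y2 Y3 : Type*} [Fintype Y1] [Fintype Y2]
    (W : X → Y1 → Y2 → Y3 → ℝ) : X → Y3 → ℝ :=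
  fun x y3 => ∑ y1, ∑ y2, W x y1 y2 y3

/-- Average-error ID code for the three-receiver BC: every `Q m1 m2 m3` is a
PMF on `Xⁿ`, and for each receiver `k` the mixtures (averaging uniformly over
the other two messages) form an ID code for the marginal channel `W_k`. -/
def IsBC3IDCode {X Y1 Y2 Y3 : Type*}
    [Fintype X] [Fintype Y1] [Fintype Y2] [Fintype Y3]
    (n k1 k2 k3 : ℕ) (W : X → Y1 → Y2 → Y3 → ℝ)
    (Q : Fin k1 → Fin k2 → Fin k3 → (Fin n → X) → ℝ)
    (D1 : Fin k1 → Finset (Fin n → Y1))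
    (D2 : Fin k2 → Finset (Fin n → Y2))
    (D3 : Fin k3 → Finset (Fin n → Y3))
    (l11 l21 l12 l22 l13 l23 : ℝ) : Prop :=
  (∀ m1 m2 m3, IsPMF (Q m1 m2 m3)) ∧
  IDCodeErr n (marg1 W)
    (fun m1 x => ((k2 * k3 : ℕ) : ℝ)⁻¹ * ∑ m2, ∑ m3, Q m1 m2 m3 x) D1 l11 l21 ∧
  IDCodeErr n (marg2 W)
    (fun m2 x => ((k1 * k3 : ℕ) : ℝ)⁻¹ * ∑ m1, ∑ m3, Q m1 m2 m3 x) D2 l12 l22 ∧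
  IDCodeErr n (marg3 W)
    (fun m3 x => ((k1 * k2 : ℕ) : ℝ)⁻¹ * ∑ m1, ∑ m2, Q m1 m2 m3 x) D3 l13 l23

lemma IsPMF.exists_le {ι : Type*} [Fintype ι] {q F : ι → ℝ} {c : ℝ} (hq : IsPMF q)
    (h : ∑ x, q x * F x ≤ c) : ∃ x, F x ≤ c := by
  by_contra! hF
  have h1 : ∑ x, q x * (F x - c) ≤ 0 := by
    simp only [mul_sub, sum_sub_distrib, ← sum_mul, hq.2]
    linarith
  have h2 : ∀ x ∈ univ, 0 ≤ q x * (F x - c) :=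
    fun x _ => mul_nonneg (hq.1 x) (by linarith [hF x])
  have h3 := (sum_eq_zero_iff_of_nonneg h2).1 (le_antisymm h1 (sum_nonneg h2))
  have h4 : ∑ x, q x = 0 := sum_eq_zero fun x hx => by
    rcases mul_eq_zero.1 (h3 x hx) with h | h
    · exact h
    · linarith [hF x]
  linarith [hq.2]

/-- Empirical approximation of a barycentre in a weighted `ℓ²` norm (Maurey's argument, with the
points chosen greedily). -/
lemma exists_tuple_sum_sq_le {ι Y : Type*} [Fintype ι] [Fintype Y] {q : ι → ℝ} (hq : IsPMF q)
    (f : ι → Y → ℝ) {w : Y → ℝ} (hw : ∀ y, 0 ≤ w y) {C : ℝ}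
    (hC : ∑ x, q x * ∑ y, w y * f x y ^ 2 ≤ C) (K : ℕ) :
    ∃ u : Fin K → ι,
      ∑ y, w y * (K * (∑ x, q x * f x y) - ∑ i, f (u i) y) ^ 2 ≤ K * C := by
  induction K with
  | zero => exact ⟨Fin.elim0, by simp⟩
  | succ K ih =>
    obtain ⟨u, hu⟩ := ih
    set p : Y → ℝ := fun y => ∑ x, q x * f x y with hp
    set a : Y → ℝ := fun y => K * p y - ∑ i, f (u i) y with ha
    have key : ∀ y, ∑ x, q x * (a y + p y - f x y) ^ 2
        = a y ^ 2 - p y ^ 2 + ∑ x, q x * f x y ^ 2 := by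
      intro y
      have : ∀ x, q x * (a y + p y - f x y) ^ 2 = q x * (a y + p y) ^ 2
          - 2 * (a y + p y) * (q x * f x y) + q x * f x y ^ 2 := fun x => by ring
      simp only [this, sum_add_distrib, sum_sub_distrib, ← sum_mul, ← mul_sum, hq.2]
      change _ - 2 * (a y + p y) * p y + _ = _
      ring
    have havg : ∑ x, q x * ∑ y, w y * (a y + p y - f x y) ^ 2 ≤ (K + 1) * C := by
      have e1 : ∑ x, q x * ∑ y, w y * (a y + p y - f x y) ^ 2
          = ∑ y, w y * (a y ^ 2 - p y ^ 2 + ∑ x, q x * f x y ^ 2) := by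
        simp only [← key, mul_sum]
        rw [sum_comm]
        exact sum_congr rfl fun y _ => sum_congr rfl fun x _ => by ring
      have e2 : ∑ x, q x * ∑ y, w y * f x y ^ 2 = ∑ y, w y * ∑ x, q x * f x y ^ 2 := by
        simp only [mul_sum]
        rw [sum_comm]
        exact sum_congr rfl fun y _ => sum_congr rfl fun x _ => by ring
      have e3 : 0 ≤ ∑ y, w y * p y ^ 2 :=
        sum_nonneg fun y _ => mul_nonneg (hw y) (sq_nonneg _)
      rw [e1]
      simp only [mul_add, mul_sub, sum_add_distrib, sum_sub_distrib]
      rw [e2] at hC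
      linarith
    obtain ⟨x, hx⟩ := hq.exists_le havg
    refine ⟨Fin.cons x u, ?_⟩
    push_cast
    refine le_of_eq_of_le (sum_congr rfl fun y _ => ?_) hx
    simp only [Fin.sum_univ_succ, Fin.cons_zero, Fin.cons_succ, ha, hp]
    ring

/-- One-sided soft covering: if the kernel `Wc` is dominated by `T • V` up to mass `δ`, then every
mixture of its rows is approximated from below by the empirical mean of `K` rows. -/
lemma exists_tuple_soft_covering {ι Y : Type*} [Fintype ι] [Fintype Y] {q : ι → ℝ} (hq : IsPMF q)
    {Wc : ι → Y → ℝ} (hWc : IsChannel Wc) {V : Y → ℝ} (hV : ∀ y, 0 ≤ V y)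
    {N T δ : ℝ} (hVN : ∑ y, V y ≤ N) (hT : 0 ≤ T) (hδ : 0 ≤ δ)
    (htail : ∀ x, q x ≠ 0 → ∑ y, (if Wc x y ≤ T * V y then 0 else Wc x y) ≤ δ)
    {K : ℕ} (hK0 : 0 < K) (hK : N * T ≤ K * δ ^ 2) :
    ∃ u : Fin K → ι, ∀ D : Finset Y,
      ∑ x, q x * ∑ y ∈ D, Wc x y ≤ (K : ℝ)⁻¹ * ∑ i, ∑ y ∈ D, Wc (u i) y + 2 * δ := by
  set f : ι → Y → ℝ := fun x y => if Wc x y ≤ T * V y then Wc x y else 0 with hf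
  have hf0 : ∀ x y, 0 ≤ f x y := fun x y => by
    simp only [hf]; split_ifs; exacts [hWc.1 x y, le_rfl]
  have hfW : ∀ x y, f x y ≤ Wc x y := fun x y => by
    simp only [hf]; split_ifs; exacts [le_rfl, hWc.1 x y]
  have hfV : ∀ x y, f x y ≤ T * V y := fun x y => by
    simp only [hf]; split_ifs with h; exacts [h, mul_nonneg hT (hV y)]
  have hC : ∑ x, q x * ∑ y, (V y)⁻¹ * f x y ^ 2 ≤ T := by
    calc ∑ x, q x * ∑ y, (V y)⁻¹ * f x y ^ 2 ≤ ∑ x, q x * T := by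
          refine sum_le_sum fun x _ => mul_le_mul_of_nonneg_left ?_ (hq.1 x)
          calc ∑ y, (V y)⁻¹ * f x y ^ 2 ≤ ∑ y, T * Wc x y := by
                refine sum_le_sum fun y _ => ?_
                rcases (hV y).eq_or_lt with h | h
                · rw [← h]; simpa using mul_nonneg hT (hWc.1 x y)
                · rw [inv_mul_le_iff₀ h, sq]
                  calc f x y * f x y ≤ (T * V y) * Wc x y :=
                        mul_le_mul (hfV x y) (hfW x y) (hf0 x y) (mul_nonneg hT (hV y))
                    _ = V y * (T * Wc x y) := by ring
            _ = T := by rw [← mul_sum, hWc.2, mul_one]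
      _ = T := by rw [← sum_mul, hq.2, one_mul]
  obtain ⟨u, hu⟩ := exists_tuple_sum_sq_le hq f (fun y => inv_nonneg.2 (hV y)) hC K
  refine ⟨u, fun D => ?_⟩
  have hKpos : (0 : ℝ) < K := by exact_mod_cast hK0
  set r : Y → ℝ := fun y => K * (∑ x, q x * f x y) - ∑ i, f (u i) y with hr
  have hcs : (∑ y ∈ D, r y) ^ 2 ≤ (∑ y ∈ D, (V y)⁻¹ * r y ^ 2) * ∑ y ∈ D, V y := by
    refine sum_sq_le_sum_mul_sum_of_sq_le_mul D
      (fun y _ => mul_nonneg (inv_nonneg.2 (hV y)) (sq_nonneg _)) (fun y _ => hV y) fun y _ => le_of_eq ?_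
    rcases (hV y).eq_or_lt with h | h
    · have hz : ∀ x, f x y = 0 := fun x =>
        le_antisymm (by simpa [← h] using hfV x y) (hf0 x y)
      simp [hr, hz]
    · field_simp
  have hsq : (∑ y ∈ D, r y) ^ 2 ≤ (K * δ) ^ 2 := by
    have h1 : ∑ y ∈ D, (V y)⁻¹ * r y ^ 2 ≤ K * T :=
      (sum_le_univ_sum_of_nonneg
        fun y => mul_nonneg (inv_nonneg.2 (hV y)) (sq_nonneg _)).trans hu
    have h2 : ∑ y ∈ D, V y ≤ N := (sum_le_univ_sum_of_nonneg hV).trans hVN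
    calc _ ≤ (K * T) * N := hcs.trans
          (mul_le_mul h1 h2 (sum_nonneg fun y _ => hV y) (mul_nonneg hKpos.le hT))
      _ = K * (N * T) := by ring
      _ ≤ K * (K * δ ^ 2) := mul_le_mul_of_nonneg_left hK hKpos.le
      _ = _ := by ring
  have hrD : ∑ y ∈ D, r y ≤ K * δ := le_of_sq_le_sq hsq (by positivity)
  have hrD' : K * (∑ x, q x * ∑ y ∈ D, f x y) - ∑ i, ∑ y ∈ D, f (u i) y ≤ K * δ := by
    refine le_of_eq_of_le ?_ hrD
    simp only [hr, sum_sub_distrib, mul_sum]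
    rw [sum_comm, sum_comm (s := D) (t := univ) (f := fun y i => f (u i) y)]
  have hlist : ∑ i, ∑ y ∈ D, f (u i) y ≤ ∑ i, ∑ y ∈ D, Wc (u i) y :=
    sum_le_sum fun i _ => sum_le_sum fun y _ => hfW _ _
  have hmix : ∑ x, q x * ∑ y ∈ D, Wc x y ≤ ∑ x, q x * ∑ y ∈ D, f x y + δ := by
    have h1 : ∀ x, q x * ∑ y ∈ D, Wc x y ≤ q x * ∑ y ∈ D, f x y + q x * δ := by
      intro x
      by_cases hx : q x = 0
      · simp [hx]
      rw [← mul_add]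
      refine mul_le_mul_of_nonneg_left ?_ (hq.1 x)
      have h2 : ∑ y ∈ D, (Wc x y - f x y) ≤ δ := by
        refine (sum_le_univ_sum_of_nonneg fun y => sub_nonneg.2 (hfW x y)).trans ?_
        refine le_of_eq_of_le (sum_congr rfl fun y _ => ?_) (htail x hx)
        simp only [hf]; split_ifs <;> simp
      rw [sum_sub_distrib] at h2
      linarith
    calc _ ≤ ∑ x, (q x * ∑ y ∈ D, f x y + q x * δ) := sum_le_sum fun x _ => h1 x
      _ = _ := by rw [sum_add_distrib, ← sum_mul, hq.2, one_mul]
  have hfin : ∑ x, q x * ∑ y ∈ D, f x y ≤ (K : ℝ)⁻¹ * ∑ i, ∑ y ∈ D, Wc (u i) y + δ := by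
    have : K * (∑ x, q x * ∑ y ∈ D, f x y) ≤ K * ((K : ℝ)⁻¹ * ∑ i, ∑ y ∈ D, Wc (u i) y + δ) := by
      rw [mul_add, mul_inv_cancel_left₀ hKpos.ne']
      linarith
    exact le_of_mul_le_mul_left this hKpos
  linarith

/-- Messages that put mass at least `b` on a set `B` whose mixtures are resolvable by `K` rows
are few. -/
lemma card_heavy_messages_le {ι Y M : Type*} [Fintype ι] [Fintype Y] [Fintype M]
    {Wc : ι → Y → ℝ} (hWc : IsChannel Wc) {Q : M → ι → ℝ} (hQ : ∀ m, IsPMF (Q m))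
    (D : M → Finset Y) {l1 l2 b δ : ℝ} {K : ℕ} (hK0 : 0 < K)
    (hmiss : ∀ m, ∑ x, Q m x * ∑ y ∈ (D m)ᶜ, Wc x y ≤ l1)
    (hwrong : ∀ m m', m ≠ m' → ∑ x, Q m x * ∑ y ∈ D m', Wc x y ≤ l2)
    (B : Finset ι)
    (hres : ∀ q, IsPMF q → (∀ x, q x ≠ 0 → x ∈ B) → ∃ u : Fin K → ι, ∀ D : Finset Y,
      ∑ x, q x * ∑ y ∈ D, Wc x y ≤ (K : ℝ)⁻¹ * ∑ i, ∑ y ∈ D, Wc (u i) y + 2 * δ)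
    (hl1 : 0 ≤ l1) (hl2 : 0 ≤ l2) (hb : 0 < b) (hlb : l1 + l2 < b * (1 - 4 * δ)) :
    (univ.filter fun m => b ≤ ∑ x ∈ B, Q m x).card ≤ Fintype.card ι ^ K := by
  have hKpos : (0 : ℝ) < K := by exact_mod_cast hK0
  have hcompl : ∀ (E : Finset Y) x, ∑ y ∈ Eᶜ, Wc x y = 1 - ∑ y ∈ E, Wc x y := fun E x => by
    rw [← hWc.2 x, ← sum_add_sum_compl E]; ring
  have hlist : ∀ m, ∃ u : Fin K → ι, b ≤ ∑ x ∈ B, Q m x → ∀ (E : Finset Y) (l : ℝ), 0 ≤ l →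
      ∑ x, Q m x * ∑ y ∈ Eᶜ, Wc x y ≤ l →
      1 - l / b ≤ (K : ℝ)⁻¹ * ∑ i, ∑ y ∈ E, Wc (u i) y + 2 * δ := by
    intro m
    by_cases hm : b ≤ ∑ x ∈ B, Q m x
    swap
    · have : Nonempty ι := by
        by_contra h
        rw [not_nonempty_iff] at h
        simpa using (hQ m).2
      exact ⟨fun _ => Classical.arbitrary ι, fun h => absurd h hm⟩
    set β := ∑ x ∈ B, Q m x with hβ
    have hβ0 : 0 < β := hb.trans_le hm
    set q : ι → ℝ := fun x => if x ∈ B then Q m x / β else 0 with hq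
    have hqp : IsPMF q := by
      refine ⟨fun x => ?_, ?_⟩
      · simp only [hq]; split_ifs
        · exact div_nonneg ((hQ m).1 x) hβ0.le
        · exact le_rfl
      · simp only [hq, sum_ite_mem, univ_inter, ← sum_div]
        exact div_self hβ0.ne'
    obtain ⟨u, hu⟩ := hres q hqp fun x hx => by
      by_contra h
      exact hx (by simp [hq, h])
    refine ⟨u, fun _ E l hl hE => le_trans ?_ (hu E)⟩
    have h1 : ∑ x, q x * ∑ y ∈ Eᶜ, Wc x y ≤ l / b := by
      calc ∑ x, q x * ∑ y ∈ Eᶜ, Wc x y ≤ ∑ x, Q m x / β * ∑ y ∈ Eᶜ, Wc x y := by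
            refine sum_le_sum fun x _ =>
              mul_le_mul_of_nonneg_right ?_ (sum_nonneg fun y _ => hWc.1 x y)
            simp only [hq]; split_ifs
            · exact le_rfl
            · exact div_nonneg ((hQ m).1 x) hβ0.le
        _ = (∑ x, Q m x * ∑ y ∈ Eᶜ, Wc x y) / β := by
            rw [sum_div]; exact sum_congr rfl fun x _ => by ring
        _ ≤ l / β := by gcongr
        _ ≤ l / b := by gcongr
    simp only [hcompl, mul_sub, mul_one, sum_sub_distrib, hqp.2] at h1
    linarith
  choose u hu using hlist
  have hinj : Set.InjOn u (univ.filter fun m => b ≤ ∑ x ∈ B, Q m x : Finset M) := by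
    intro m hm m' hm' huu
    by_contra hne
    replace hm := (mem_filter.1 (mem_coe.1 hm)).2
    replace hm' := (mem_filter.1 (mem_coe.1 hm')).2
    have h1 := hu m hm (D m) l1 hl1 (hmiss m)
    have h2 := hu m' hm' (D m)ᶜ l2 hl2 (by simpa using hwrong m' m (Ne.symm hne))
    have h3 : (K : ℝ)⁻¹ * ∑ i, ∑ y ∈ (D m)ᶜ, Wc (u m' i) y
        = 1 - (K : ℝ)⁻¹ * ∑ i, ∑ y ∈ D m, Wc (u m' i) y := by
      simp only [hcompl, sum_sub_distrib, mul_sub]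
      simp [hKpos.ne']
    rw [h3, ← huu] at h2
    have h4 : 1 - 4 * δ ≤ (l1 + l2) / b := by rw [add_div]; linarith
    rw [le_div_iff₀ hb] at h4
    linarith
  calc _ ≤ (univ : Finset (Fin K → ι)).card :=
        card_le_card_of_injOn u (fun _ _ => mem_coe.2 (mem_univ _)) hinj
    _ = _ := by simp

lemma sum_pi_prod {Y : Type*} [Fintype Y] {n : ℕ} (F : Fin n → Y → ℝ) :
    ∑ y : Fin n → Y, ∏ i, F i (y i) = ∏ i, ∑ y, F i y := by
  rw [prod_univ_sum]
  simp

lemma IsChannel.wn {X Y : Type*} [Fintype Y] {W : X → Y → ℝ} (hW : IsChannel W) (n : ℕ) :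
    IsChannel (Wn W n) := by
  refine ⟨fun x y => prod_nonneg fun i _ => hW.1 _ _, fun x => ?_⟩
  simp only [Wn, sum_pi_prod (fun i y => W (x i) y), hW.2, prod_const_one]

/-- Chernoff bound for a sum of independent bounded variables. -/
lemma chernoff_sum_le {Y : Type*} [Fintype Y] {n : ℕ} {w g : Fin n → Y → ℝ}
    (hw : ∀ i y, 0 ≤ w i y) (hw1 : ∀ i, ∑ y, w i y = 1) {L s : ℝ}
    (hg : ∀ i y, w i y ≠ 0 → |g i y| ≤ L) (hs : 0 ≤ s) (hsL : s * L ≤ 1) (t : ℝ) :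
    ∑ y : Fin n → Y, (if ∑ i, g i (y i) ≤ t then 0 else ∏ i, w i (y i))
      ≤ Real.exp (s * (∑ i, ∑ y, w i y * g i y - t) + n * (s ^ 2 * L ^ 2)) := by
  have hone : ∀ i, ∑ y, w i y * Real.exp (s * g i y)
      ≤ Real.exp (s * (∑ y, w i y * g i y) + s ^ 2 * L ^ 2) := by
    intro i
    have h1 : ∀ y, w i y * Real.exp (s * g i y)
        ≤ w i y * (1 + s ^ 2 * L ^ 2) + s * (w i y * g i y) := by
      intro y
      by_cases h0 : w i y = 0
      · simp [h0]
      have hgL := hg i y h0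
      have habs : |s * g i y| ≤ s * L := by
        rw [abs_mul, abs_of_nonneg hs]; gcongr
      have h2 := (abs_le.1 (Real.abs_exp_sub_one_sub_id_le (habs.trans hsL))).2
      have h3 : (s * g i y) ^ 2 ≤ (s * L) ^ 2 := sq_le_sq' (by linarith [(abs_le.1 habs).1])
        (abs_le.1 habs).2
      calc _ ≤ w i y * (1 + s * g i y + s ^ 2 * L ^ 2) :=
            mul_le_mul_of_nonneg_left (by nlinarith) (hw i y)
        _ = _ := by ring
    calc _ ≤ ∑ y, (w i y * (1 + s ^ 2 * L ^ 2) + s * (w i y * g i y)) :=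
          sum_le_sum fun y _ => h1 y
      _ = s * (∑ y, w i y * g i y) + s ^ 2 * L ^ 2 + 1 := by
          rw [sum_add_distrib, ← sum_mul, ← mul_sum, hw1]; ring
      _ ≤ _ := Real.add_one_le_exp _
  calc _ ≤ ∑ y : Fin n → Y, Real.exp (-(s * t)) * ∏ i, (w i (y i) * Real.exp (s * g i (y i))) := by
        refine sum_le_sum fun y _ => ?_
        have hp : 0 ≤ ∏ i, w i (y i) := prod_nonneg fun i _ => hw i _
        rw [prod_mul_distrib, ← Real.exp_sum, ← mul_sum]
        split_ifs with h
        · positivity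
        · have : 1 ≤ Real.exp (-(s * t)) * Real.exp (s * ∑ i, g i (y i)) := by
            rw [← Real.exp_add]
            apply Real.one_le_exp
            nlinarith [not_le.1 h]
          nlinarith
    _ = Real.exp (-(s * t)) * ∏ i, ∑ y, w i y * Real.exp (s * g i y) := by
        rw [← mul_sum, sum_pi_prod (fun i y => w i y * Real.exp (s * g i y))]
    _ ≤ Real.exp (-(s * t)) * ∏ i, Real.exp (s * (∑ y, w i y * g i y) + s ^ 2 * L ^ 2) := by
        refine mul_le_mul_of_nonneg_left (prod_le_prod (fun i _ => ?_) fun i _ => hone i)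
          (Real.exp_pos _).le
        exact sum_nonneg fun y _ => mul_nonneg (hw i y) (Real.exp_pos _).le
    _ = _ := by
        rw [← Real.exp_sum, ← Real.exp_add, sum_add_distrib, ← mul_sum]
        simp only [sum_const, card_univ, Fintype.card_fin, nsmul_eq_mul]
        congr 1; ring

lemma mutInf_eq {X Y : Type*} [Fintype X] [Fintype Y] (P : X → ℝ) (W : X → Y → ℝ) :
    mutInf P W = ∑ x, P x * ∑ y, W x y * Real.log (W x y / ∑ x', P x' * W x' y) := by
  simp only [mutInf, mul_sum]
  refine sum_congr rfl fun x _ => sum_congr rfl fun y _ => ?_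
  split_ifs with h
  · rw [← mul_assoc, h, zero_mul]
  · ring

lemma mutInf_nonneg {X Y : Type*} [Fintype X] [Fintype Y] {P : X → ℝ} {W : X → Y → ℝ}
    (hP : IsPMF P) (hW : IsChannel W) : 0 ≤ mutInf P W := by
  have hPW : ∀ x y, 0 ≤ P x * W x y := fun x y => mul_nonneg (hP.1 x) (hW.1 x y)
  have hone : ∑ x, ∑ y, P x * W x y = 1 := by
    simp only [← mul_sum, hW.2, mul_one, hP.2]
  have hprod : ∑ x, ∑ y, P x * ∑ x', P x' * W x' y = 1 := by
    simp only [← mul_sum, ← sum_mul, hP.2, one_mul]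
    rw [sum_comm]; exact hone
  have hle : ∑ x, ∑ y, (P x * W x y - P x * ∑ x', P x' * W x' y) ≤ mutInf P W := by
    refine sum_le_sum fun x _ => sum_le_sum fun y _ => ?_
    have hv : P x * W x y ≤ ∑ x', P x' * W x' y :=
      single_le_sum (f := fun x' => P x' * W x' y) (fun x' _ => hPW x' y) (mem_univ x)
    split_ifs with h
    · rw [h]
      have := mul_nonneg (hP.1 x) ((hPW x y).trans hv)
      linarith
    · have hpos : 0 < P x * W x y := lt_of_le_of_ne (hPW x y) (Ne.symm h)
      have hWpos : 0 < W x y := lt_of_le_of_ne (hW.1 x y) fun h0 => h (by rw [← h0, mul_zero])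
      have hvpos := hpos.trans_le hv
      have hlog := Real.one_sub_inv_le_log_of_pos (div_pos hWpos hvpos)
      rw [inv_div] at hlog
      calc _ = P x * W x y * (1 - (∑ x', P x' * W x' y) / W x y) := by field_simp
        _ ≤ _ := mul_le_mul_of_nonneg_left hlog hpos.le
  simp only [sum_sub_distrib, hone, hprod] at hle
  linarith

/-- The type (empirical distribution) of a sequence. -/
def seqType {X : Type*} {n : ℕ} (x : Fin n → X) (a : X) : ℝ :=
  (n : ℝ)⁻¹ * ((univ.filter fun i => x i = a).card : ℝ)

lemma sum_seqType_mul {X : Type*} [Fintype X] {n : ℕ} (x : Fin n → X) (h : X → ℝ) :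
    ∑ a, seqType x a * h a = (n : ℝ)⁻¹ * ∑ i, h (x i) := by
  simp only [seqType, mul_assoc, ← mul_sum]
  congr 1
  rw [← sum_fiberwise univ x]
  refine sum_congr rfl fun a _ => ?_
  rw [← nsmul_eq_mul, ← sum_const]
  exact sum_congr rfl fun i hi => by rw [(mem_filter.1 hi).2]

lemma isPMF_seqType {X : Type*} [Fintype X] {n : ℕ} (hn : 0 < n) (x : Fin n → X) :
    IsPMF (seqType x) := by
  refine ⟨fun a => by unfold seqType; positivity, ?_⟩
  have h := sum_seqType_mul x fun _ => 1
  have : (n : ℝ) ≠ 0 := by positivity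
  simpa [this] using h

lemma card_image_seqType_le (X : Type*) [Fintype X] (n : ℕ) :
    (univ.image (seqType : (Fin n → X) → X → ℝ)).card ≤ (n + 1) ^ Fintype.card X := by
  have hsub : univ.image (seqType : (Fin n → X) → X → ℝ) ⊆
      univ.image fun (τ : X → Fin (n + 1)) (a : X) => (n : ℝ)⁻¹ * ((τ a : ℕ) : ℝ) := by
    intro P hP
    obtain ⟨x, -, rfl⟩ := mem_image.1 hP
    refine mem_image.2 ⟨fun a => ⟨(univ.filter fun i => x i = a).card, ?_⟩, mem_univ _, rfl⟩
    exact Nat.lt_succ_of_le ((card_filter_le _ _).trans (by simp))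
  refine (card_le_card hsub).trans (card_image_le.trans ?_)
  simp

/-- Under the memoryless channel, the information density of `x` relative to its own type exceeds
the mutual information with exponentially small probability. -/
lemma tail_seqType_le {X Y : Type*} [Fintype X] [Fintype Y] {W : X → Y → ℝ} (hW : IsChannel W)
    {c : ℝ} (hc : ∀ x y, W x y ≠ 0 → -Real.log (W x y) ≤ c) {n : ℕ} (hn : 0 < n)
    (x : Fin n → X) {L s : ℝ} (hL : Real.log n + c ≤ L) (hc0 : 0 ≤ c)
    (hs : 0 ≤ s) (hsL : s * L ≤ 1) (t : ℝ) :
    ∑ y, (if Wn W n x y ≤ Real.exp t * ∏ i, ∑ a, seqType x a * W a (y i) then 0 else Wn W n x y)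
      ≤ Real.exp (s * (n * mutInf (seqType x) W - t) + n * (s ^ 2 * L ^ 2)) := by
  have hnpos : (0 : ℝ) < n := by exact_mod_cast hn
  have hlogn : 0 ≤ Real.log n := Real.log_natCast_nonneg n
  have hP := isPMF_seqType hn x
  have hle1 : ∀ a y, W a y ≤ 1 := fun a y => by
    rw [← hW.2 a]; exact single_le_sum (fun y _ => hW.1 a y) (mem_univ y)
  have hv1 : ∀ y, ∑ a, seqType x a * W a y ≤ 1 := fun y => by
    rw [← hP.2]
    exact sum_le_sum fun a _ => mul_le_of_le_one_right (hP.1 a) (hle1 a y)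
  have hv : ∀ i y, W (x i) y ≤ n * ∑ a, seqType x a * W a y := fun i y => by
    rw [sum_seqType_mul, mul_inv_cancel_left₀ hnpos.ne']
    exact single_le_sum (f := fun j => W (x j) y) (fun j _ => hW.1 _ _) (mem_univ i)
  set g : Fin n → Y → ℝ :=
    fun i y => Real.log (W (x i) y / ∑ a, seqType x a * W a y) with hg
  have hmean : ∑ i, ∑ y, W (x i) y * g i y = n * mutInf (seqType x) W := by
    rw [mutInf_eq, sum_seqType_mul, mul_inv_cancel_left₀ hnpos.ne']
  have hvpos : ∀ i y, W (x i) y ≠ 0 → 0 < ∑ a, seqType x a * W a y := fun i y h => by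
    have h1 : 0 < W (x i) y := lt_of_le_of_ne (hW.1 _ _) (Ne.symm h)
    exact pos_of_mul_pos_right (h1.trans_le (hv i y)) hnpos.le
  have hgL : ∀ i y, W (x i) y ≠ 0 → |g i y| ≤ L := by
    intro i y h
    have h1 : 0 < W (x i) y := lt_of_le_of_ne (hW.1 _ _) (Ne.symm h)
    have h2 := hvpos i y h
    simp only [hg]
    rw [Real.log_div h1.ne' h2.ne', abs_le]
    have h3 := hc _ _ h
    have h4 : Real.log (∑ a, seqType x a * W a y) ≤ 0 := Real.log_nonpos h2.le (hv1 y)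
    have h5 := Real.log_le_log h1 (hv i y)
    rw [Real.log_mul hnpos.ne' h2.ne'] at h5
    constructor <;> linarith
  have hch := chernoff_sum_le (w := fun i y => W (x i) y) (fun i y => hW.1 _ _)
    (fun i => hW.2 _) hgL hs hsL t
  rw [hmean] at hch
  refine le_trans (sum_le_sum fun y _ => ?_) hch
  have hWn0 := (hW.wn n).1 x y
  by_cases hz : ∀ i, W (x i) (y i) ≠ 0
  · by_cases hgt : ∑ i, g i (y i) ≤ t
    · rw [if_pos]
      · simp [hgt]
      · have h1 : ∀ i, W (x i) (y i)
            = Real.exp (g i (y i)) * ∑ a, seqType x a * W a (y i) := fun i => by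
          have h2 : 0 < W (x i) (y i) := lt_of_le_of_ne (hW.1 _ _) (Ne.symm (hz i))
          rw [Real.exp_log (div_pos h2 (hvpos i _ (hz i))),
            div_mul_cancel₀ _ (hvpos i _ (hz i)).ne']
        have h3 : Wn W n x y
            = Real.exp (∑ i, g i (y i)) * ∏ i, ∑ a, seqType x a * W a (y i) := by
          rw [Real.exp_sum, ← prod_mul_distrib]
          exact prod_congr rfl fun i _ => h1 i
        rw [h3]
        refine mul_le_mul_of_nonneg_right (Real.exp_le_exp.2 hgt) (prod_nonneg fun i _ => ?_)
        exact sum_nonneg fun a _ => mul_nonneg (hP.1 a) (hW.1 _ _)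
    · rw [if_neg hgt]
      split_ifs
      exacts [hWn0, le_rfl]
  · push Not at hz
    obtain ⟨i, hi⟩ := hz
    have h0 : Wn W n x y = 0 := prod_eq_zero (mem_univ i) hi
    have h0' : ∏ i, W (x i) (y i) = 0 := h0
    rw [h0, h0']
    simp

lemma eventually_log_add_sq_le (a c : ℝ) {b : ℝ} (hb : 0 < b) :
    ∀ᶠ n : ℕ in Filter.atTop, a * (Real.log n + c) ^ 2 ≤ b * n := by
  have h1 : (fun x : ℝ => Real.log x + c) =o[Filter.atTop] fun x : ℝ => x ^ (1 / 2 : ℝ) :=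
    (isLittleO_log_rpow_atTop (by norm_num)).add <| Asymptotics.isLittleO_const_left.2 <| Or.inr <|
      tendsto_norm_atTop_atTop.comp (tendsto_rpow_atTop (by norm_num))
  have h2 := ((h1.pow (n := 2) (by norm_num)).const_mul_left a).def hb
  filter_upwards [tendsto_natCast_atTop_atTop.eventually h2] with n hn
  have h3 : (((n : ℝ) ^ (1 / 2 : ℝ)) ^ 2) = n := by
    rw [← Real.rpow_natCast, ← Real.rpow_mul n.cast_nonneg]; norm_num
  rw [h3] at hn
  refine (Real.le_norm_self _).trans (hn.trans_eq ?_)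
  simp

lemma eventually_succ_pow_mul_exp_le (d : ℕ) {γ δ : ℝ} (hγ : 0 < γ) (hδ : 0 < δ) :
    ∀ᶠ n : ℕ in Filter.atTop, ((n : ℝ) + 1) ^ d * Real.exp (-(n * γ)) ≤ δ := by
  have hr : |Real.exp (-γ)| < 1 := by
    rw [abs_of_pos (Real.exp_pos _), Real.exp_lt_one_iff]; linarith
  have h := (Filter.tendsto_add_atTop_iff_nat 1).2
    (tendsto_pow_const_mul_const_pow_of_abs_lt_one d hr)
  have hev := h.eventually_le_const (u := δ * Real.exp (-γ)) (by positivity)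
  filter_upwards [hev] with n hn
  rw [pow_succ, ← mul_assoc, ← Real.exp_nat_mul] at hn
  push_cast at hn
  rw [mul_neg] at hn
  exact le_of_mul_le_mul_right hn (Real.exp_pos _)

lemma eventually_mul_exp_add_le (l d : ℝ) {R γ : ℝ} (hR : 0 < R) (hγ : 0 < γ) :
    ∀ᶠ n : ℕ in Filter.atTop,
      n * l * (Real.exp (n * (R - γ)) + 1) + d ≤ Real.exp (n * R) := by
  have hr : ∀ {a : ℝ}, 0 < a → |Real.exp (-a)| < 1 := fun {a} ha => by
    rw [abs_of_pos (Real.exp_pos _), Real.exp_lt_one_iff]; linarith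
  have h1 := (tendsto_self_mul_const_pow_of_abs_lt_one (hr hγ)).const_mul l
  have h2 := (tendsto_self_mul_const_pow_of_abs_lt_one (hr hR)).const_mul l
  have h3 := (tendsto_pow_atTop_nhds_zero_of_abs_lt_one (hr hR)).const_mul d
  have h := ((h1.add h2).add h3).eventually_le_const (u := 1) (by norm_num)
  filter_upwards [h] with n hn
  simp only [← Real.exp_nat_mul] at hn
  have h4 := mul_le_mul_of_nonneg_right hn (Real.exp_pos (n * R)).le
  have h5 : Real.exp (n * -γ) * Real.exp (n * R) = Real.exp (n * (R - γ)) := by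
    rw [← Real.exp_add]; ring_nf
  have h6 : Real.exp (n * -R) * Real.exp (n * R) = 1 := by
    rw [← Real.exp_add]; simp
  calc _ = l * (n * (Real.exp (n * -γ) * Real.exp (n * R)))
        + l * (n * (Real.exp (n * -R) * Real.exp (n * R)))
        + d * (Real.exp (n * -R) * Real.exp (n * R)) := by rw [h5, h6]; ring
    _ = _ := by ring
    _ ≤ _ := h4
    _ = _ := one_mul _

/-- Resolvability for inputs whose type has mutual information at most `R - 3γ`. -/
lemma eventually_exists_tuple_approx {X Y : Type*} [Fintype X] [Fintype Y]
    {W : X → Y → ℝ} (hW : IsChannel W) (R : ℝ) {γ δ : ℝ} (hγ : 0 < γ) (hδ : 0 < δ) (hδ1 : δ ≤ 1) :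
    ∀ᶠ n : ℕ in Filter.atTop, ∀ q : (Fin n → X) → ℝ, IsPMF q →
      (∀ x, q x ≠ 0 → mutInf (seqType x) W + 3 * γ ≤ R) →
      ∃ u : Fin ⌈Real.exp (n * (R - γ))⌉₊ → (Fin n → X), ∀ D : Finset (Fin n → Y),
        ∑ x, q x * ∑ y ∈ D, Wn W n x y ≤ ((⌈Real.exp (n * (R - γ))⌉₊ : ℕ) : ℝ)⁻¹ *
          ∑ i, ∑ y ∈ D, Wn W n (u i) y + 2 * δ := by
  set c : ℝ := ∑ x, ∑ y, |Real.log (W x y)| with hc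
  have hc0 : 0 ≤ c := sum_nonneg fun _ _ => sum_nonneg fun _ _ => abs_nonneg _
  have hlogc : ∀ x y, W x y ≠ 0 → -Real.log (W x y) ≤ c := fun x y _ =>
    (neg_le_abs _).trans <| (single_le_sum (f := fun y => |Real.log (W x y)|)
      (fun _ _ => abs_nonneg _) (mem_univ y)).trans <|
      single_le_sum (f := fun x => ∑ y, |Real.log (W x y)|)
        (fun _ _ => sum_nonneg fun _ _ => abs_nonneg _) (mem_univ x)
  set a : ℝ := -2 * Real.log δ / γ with ha
  have ha0 : 0 ≤ a := div_nonneg (by linarith [Real.log_nonpos hδ.le hδ1]) hγ.le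
  filter_upwards [eventually_log_add_sq_le a (c + 1) (lt_min (half_pos hγ) one_pos),
    eventually_succ_pow_mul_exp_le (Fintype.card X) hγ (pow_pos hδ 2),
    Filter.eventually_gt_atTop 0] with n hlog hpoly hn q hq hqB
  have hnpos : (0 : ℝ) < n := by exact_mod_cast hn
  set L : ℝ := Real.log n + (c + 1) with hL
  have hL1 : 1 ≤ L := by linarith [Real.log_natCast_nonneg n]
  set T : ℝ := Real.exp (n * (R - 2 * γ)) with hT
  set types : Finset (X → ℝ) := univ.image (seqType : (Fin n → X) → X → ℝ) with htypes
  have hpmf : ∀ P ∈ types, IsPMF P := fun P hP => by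
    obtain ⟨x, -, rfl⟩ := mem_image.1 hP
    exact isPMF_seqType hn x
  set V : (Fin n → Y) → ℝ := fun y => ∑ P ∈ types, ∏ i, ∑ a, P a * W a (y i) with hV
  have hterm : ∀ P ∈ types, ∀ y : Fin n → Y, 0 ≤ ∏ i, ∑ a, P a * W a (y i) := fun P hP y =>
    prod_nonneg fun i _ => sum_nonneg fun a _ => mul_nonneg ((hpmf P hP).1 a) (hW.1 _ _)
  have hVN : ∑ y, V y ≤ ((n : ℝ) + 1) ^ Fintype.card X := by
    simp only [hV]
    rw [sum_comm]
    have h1 : ∀ P ∈ types, ∑ y : Fin n → Y, ∏ i, ∑ a, P a * W a (y i) = 1 := by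
      intro P hP
      rw [sum_pi_prod (fun _ y => ∑ a, P a * W a y)]
      refine prod_eq_one fun i _ => ?_
      rw [sum_comm]
      simp only [← mul_sum, hW.2, mul_one, (hpmf P hP).2]
    rw [sum_congr rfl h1, sum_const, nsmul_eq_mul, mul_one]
    exact_mod_cast card_image_seqType_le X n
  refine exists_tuple_soft_covering hq (hW.wn n) (V := V) (T := T)
    (fun y => sum_nonneg fun P hP => hterm P hP y) hVN (Real.exp_pos _).le hδ.le ?_
    (Nat.ceil_pos.2 (Real.exp_pos _)) ?_
  · intro x hx
    have hs0 : 0 ≤ a / n := div_nonneg ha0 hnpos.le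
    have hsL : a / n * L ≤ 1 := by
      have h1 : a * L ≤ a * L ^ 2 := mul_le_mul_of_nonneg_left (by nlinarith) ha0
      have h2 : min (γ / 2) 1 * n ≤ 1 * n :=
        mul_le_mul_of_nonneg_right (min_le_right _ _) hnpos.le
      rw [div_mul_eq_mul_div, div_le_one hnpos]
      linarith
    have htail := tail_seqType_le hW hlogc hn x (by linarith) hc0 hs0 hsL (n * (R - 2 * γ))
    refine le_trans (sum_le_sum fun y _ => ?_) (htail.trans ?_)
    · have hxV : ∏ i, ∑ a, seqType x a * W a (y i) ≤ V y :=
        single_le_sum (f := fun P : X → ℝ => ∏ i, ∑ a, P a * W a (y i))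
          (fun P hP => hterm P hP y) (mem_image_of_mem _ (mem_univ x))
      have hmul : Real.exp (n * (R - 2 * γ)) * ∏ i, ∑ a, seqType x a * W a (y i) ≤ T * V y :=
        mul_le_mul_of_nonneg_left hxV (Real.exp_pos _).le
      split_ifs with h1 h2 h2
      · exact le_rfl
      · exact ((hW.wn n).1 x y)
      · exact absurd (h2.trans hmul) h1
      · exact le_rfl
    · rw [← Real.le_log_iff_exp_le hδ]
      have h1 : a * L ^ 2 ≤ γ / 2 * n :=
        hlog.trans (mul_le_mul_of_nonneg_right (min_le_left _ _) hnpos.le)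
      have h2 : n * ((a / n) ^ 2 * L ^ 2) = a / n * (a * L ^ 2) := by field_simp
      have h3 : a / n * (a * L ^ 2) ≤ a / n * (γ / 2 * n) := mul_le_mul_of_nonneg_left h1 hs0
      have h4 : n * mutInf (seqType x) W - n * (R - 2 * γ) ≤ -(n * γ) := by
        have := mul_le_mul_of_nonneg_left (hqB x hx) hnpos.le
        linarith
      have h5 := mul_le_mul_of_nonneg_left h4 hs0
      have h6 : a / n * -(n * γ) + a / n * (γ / 2 * n) = Real.log δ := by
        simp only [ha]; field_simp; ring
      linarith
  · have h1 : T = Real.exp (-(n * γ)) * Real.exp (n * (R - γ)) := by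
      rw [← Real.exp_add, hT]; ring_nf
    rw [h1, ← mul_assoc, mul_comm _ (δ ^ 2)]
    exact mul_le_mul hpoly (Nat.le_ceil _) (Real.exp_pos _).le (sq_nonneg _)

/-- Strong converse for a single receiver: on average over the messages, sequences whose type has
too small a mutual information carry mass at most about `l1 + l2`. -/
lemma eventually_sum_low_mutInf_le {X Y : Type*} [Fintype X] [Nonempty X] [Fintype Y]
    {W : X → Y → ℝ} (hW : IsChannel W) {R : ℝ} (hR : 0 ≤ R) {l1 l2 ε δ : ℝ}
    (hl1 : 0 < l1) (hl2 : 0 < l2) (hε : 0 < ε) (hδ : 0 < δ) :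
    ∀ᶠ n : ℕ in Filter.atTop, ∀ (Q : Fin ⌈Real.exp (Real.exp (n * R))⌉₊ → (Fin n → X) → ℝ)
      (D : Fin ⌈Real.exp (Real.exp (n * R))⌉₊ → Finset (Fin n → Y)),
      IsIDCode n W Q D l1 l2 →
      ∑ m, ∑ x ∈ univ.filter (fun x : Fin n → X => mutInf (seqType x) W + ε ≤ R), Q m x
        ≤ ((⌈Real.exp (Real.exp (n * R))⌉₊ : ℕ) : ℝ) * (l1 + l2 + 2 * δ) := by
  rcases hR.eq_or_lt with rfl | hR
  · filter_upwards [Filter.eventually_gt_atTop 0] with n hn Q D _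
    rw [filter_false_of_mem fun x _ => by
      have := mutInf_nonneg (isPMF_seqType hn x) hW
      linarith]
    simp only [sum_empty, sum_const_zero]
    positivity
  set b : ℝ := l1 + l2 + δ with hb
  have hb0 : 0 < b := by positivity
  set δ' : ℝ := δ / (8 * b) with hδ'
  have hδ'0 : 0 < δ' := by positivity
  have hδ'1 : δ' ≤ 1 := by rw [hδ', div_le_one (by positivity)]; linarith
  have hγ : 0 < ε / 3 := by positivity
  filter_upwards [eventually_exists_tuple_approx hW R hγ hδ'0 hδ'1,
    eventually_mul_exp_add_le (Real.log (Fintype.card X)) (-Real.log δ) hR hγ]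
    with n happrox hcount
  set k := ⌈Real.exp (Real.exp (n * R))⌉₊ with hk
  set K := ⌈Real.exp (n * (R - ε / 3))⌉₊ with hK
  set B := univ.filter (fun x : Fin n → X => mutInf (seqType x) W + ε ≤ R) with hB
  intro Q D hcode
  have hcard := card_heavy_messages_le (hW.wn n) hcode.1 D (b := b) (δ := δ') (K := K)
    (Nat.ceil_pos.2 (Real.exp_pos _)) (fun m => by convert hcode.2.1 m) hcode.2.2 B
    (fun q hq hqB => happrox q hq fun x hx => by
      have := (mem_filter.1 (hqB x hx)).2
      linarith) hl1.le hl2.le hb0 (by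
      have : b * (1 - 4 * δ') = b - δ / 2 := by rw [hδ']; field_simp; ring
      rw [this]; linarith)
  set M' := univ.filter fun m => b ≤ ∑ x ∈ B, Q m x with hM'
  have hM'k : (M'.card : ℝ) ≤ k * δ := by
    have hX : (0 : ℝ) < Fintype.card X := by exact_mod_cast Fintype.card_pos
    have hX1 : (1 : ℝ) ≤ Fintype.card X := by exact_mod_cast Fintype.card_pos
    have hKle : (K : ℝ) ≤ Real.exp (n * (R - ε / 3)) + 1 := (Nat.ceil_lt_add_one (Real.exp_pos _).le).le
    calc (M'.card : ℝ) ≤ ((Fintype.card (Fin n → X)) ^ K : ℕ) := by exact_mod_cast hcard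
      _ = Real.exp (n * Real.log (Fintype.card X) * K) := by
          rw [mul_comm (n * _ : ℝ), Real.exp_nat_mul, Real.exp_nat_mul, Real.exp_log hX]
          simp
      _ ≤ Real.exp (Real.exp (n * R) + Real.log δ) := by
          apply Real.exp_le_exp.2
          have : n * Real.log (Fintype.card X) * K
              ≤ n * Real.log (Fintype.card X) * (Real.exp (n * (R - ε / 3)) + 1) :=
            mul_le_mul_of_nonneg_left hKle (mul_nonneg n.cast_nonneg (Real.log_nonneg hX1))
          linarith
      _ = Real.exp (Real.exp (n * R)) * δ := by rw [Real.exp_add, Real.exp_log hδ]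
      _ ≤ k * δ := mul_le_mul_of_nonneg_right (Nat.le_ceil _) hδ.le
  have hone : ∀ m, ∑ x ∈ B, Q m x ≤ b + if m ∈ M' then 1 else 0 := by
    intro m
    split_ifs with h
    · have : ∑ x ∈ B, Q m x ≤ ∑ x, Q m x := sum_le_univ_sum_of_nonneg (hcode.1 m).1
      rw [(hcode.1 m).2] at this
      linarith
    · have : ¬ b ≤ ∑ x ∈ B, Q m x := fun h' => h (mem_filter.2 ⟨mem_univ m, h'⟩)
      linarith
  calc ∑ m, ∑ x ∈ B, Q m x ≤ ∑ m, (b + if m ∈ M' then 1 else 0) := sum_le_sum fun m _ => hone m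
    _ = k * b + M'.card := by simp [sum_add_distrib]
    _ ≤ _ := by rw [hb]; linarith

lemma isPMF_average {ι : Type*} [Fintype ι] {a b : ℕ} (ha : 0 < a) (hb : 0 < b)
    {q : Fin a → Fin b → ι → ℝ} (hq : ∀ i j, IsPMF (q i j)) :
    IsPMF fun x => ((a * b : ℕ) : ℝ)⁻¹ * ∑ i, ∑ j, q i j x := by
  refine ⟨fun x => mul_nonneg (by positivity) <|
    sum_nonneg fun i _ => sum_nonneg fun j _ => (hq i j).1 x, ?_⟩
  rw [← mul_sum, sum_comm]
  simp_rw [fun i => sum_comm (s := (univ : Finset ι)) (t := (univ : Finset (Fin b)))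
    (f := fun x j => q i j x), (hq _ _).2]
  have ha' : (a : ℝ) ≠ 0 := by positivity
  have hb' : (b : ℝ) ≠ 0 := by positivity
  simp
  field_simp

lemma sum_average_le {ι : Type*} {k a : ℕ} (ha : 0 < a) {s : Finset ι} {F : Fin k → ι → ℝ} {c : ℝ}
    (h : ∑ m, ∑ x ∈ s, (a : ℝ)⁻¹ * F m x ≤ k * c) :
    ∑ x ∈ s, ∑ m, F m x ≤ (k * a : ℕ) * c := by
  have ha' : (0 : ℝ) < a := by exact_mod_cast ha
  simp only [← mul_sum] at h
  rw [inv_mul_le_iff₀ ha', sum_comm] at h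
  push_cast
  linarith

/-- **Claim 4.** Strong converse for the three-receiver BC. -/
theorem bc3_id_strong_converse
    {X Y1 Y2 Y3 : Type} [Fintype X] [Fintype Y1] [Fintype Y2] [Fintype Y3]
    [Nonempty X] [Nonempty Y1] [Nonempty Y2] [Nonempty Y3]
    (W : X → Y1 → Y2 → Y3 → ℝ) (hW : IsBC3 W)
    (R1 R2 R3 : ℝ) (hR1 : 0 ≤ R1) (hR2 : 0 ≤ R2) (hR3 : 0 ≤ R3)
    (l11 l21 l12 l22 l13 l23 : ℝ)
    (h11 : 0 < l11) (h21 : 0 < l21) (h12 : 0 < l12) (h22 : 0 < l22)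
    (h13 : 0 < l13) (h23 : 0 < l23)
    (hsum : l11 + l21 + (l12 + l22) + (l13 + l23) < 1)
    (ε : ℝ) (hε : 0 < ε) :
    ∃ η₀ : ℕ, ∀ n : ℕ, η₀ ≤ n →
      ∀ k1 k2 k3 : ℕ,
        k1 = Nat.ceil (Real.exp (Real.exp (n * R1))) →
        k2 = Nat.ceil (Real.exp (Real.exp (n * R2))) →
        k3 = Nat.ceil (Real.exp (Real.exp (n * R3))) →
        ∀ (Q : Fin k1 → Fin k2 → Fin k3 → (Fin n → X) → ℝ)
          (D1 : Fin k1 → Finset (Fin n → Y1))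
          (D2 : Fin k2 → Finset (Fin n → Y2))
          (D3 : Fin k3 → Finset (Fin n → Y3)),
          IsBC3IDCode n k1 k2 k3 W Q D1 D2 D3 l11 l21 l12 l22 l13 l23 →
          ∃ P : X → ℝ, IsPMF P ∧
            R1 < mutInf P (marg1 W) + ε ∧
            R2 < mutInf P (marg2 W) + ε ∧
            R3 < mutInf P (marg3 W) + ε := by
  have hW1 : IsChannel (marg1 W) :=
    ⟨fun x y => sum_nonneg fun _ _ => sum_nonneg fun _ _ => hW.1 _ _ _ _, hW.2⟩
  have hW2 : IsChannel (marg2 W) := by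
    refine ⟨fun x y => sum_nonneg fun _ _ => sum_nonneg fun _ _ => hW.1 _ _ _ _, fun x => ?_⟩
    rw [← hW.2 x]
    exact sum_comm
  have hW3 : IsChannel (marg3 W) := by
    refine ⟨fun x y => sum_nonneg fun _ _ => sum_nonneg fun _ _ => hW.1 _ _ _ _, fun x => ?_⟩
    rw [← hW.2 x]
    simp only [marg3]
    rw [sum_comm]
    exact sum_congr rfl fun _ _ => sum_comm
  obtain ⟨δ, hδ, hδsum⟩ : ∃ δ > 0,
      (l11 + l21 + 2 * δ) + (l12 + l22 + 2 * δ) + (l13 + l23 + 2 * δ) < 1 :=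
    ⟨(1 - (l11 + l21 + (l12 + l22) + (l13 + l23))) / 12, by linarith, by linarith⟩
  obtain ⟨η₀, hη₀⟩ := Filter.eventually_atTop.1
    ((Filter.eventually_gt_atTop 0).and
      ((eventually_sum_low_mutInf_le hW1 hR1 h11 h21 hε hδ).and
      ((eventually_sum_low_mutInf_le hW2 hR2 h12 h22 hε hδ).and
      (eventually_sum_low_mutInf_le hW3 hR3 h13 h23 hε hδ))))
  refine ⟨η₀, fun n hn k1 k2 k3 hk1 hk2 hk3 Q D1 D2 D3 ⟨hQ, hD1, hD2, hD3⟩ => ?_⟩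
  obtain ⟨hn0, hlow1, hlow2, hlow3⟩ := hη₀ n hn
  rw [← hk1] at hlow1
  rw [← hk2] at hlow2
  rw [← hk3] at hlow3
  have hk1' : 0 < k1 := hk1 ▸ Nat.ceil_pos.2 (Real.exp_pos _)
  have hk2' : 0 < k2 := hk2 ▸ Nat.ceil_pos.2 (Real.exp_pos _)
  have hk3' : 0 < k3 := hk3 ▸ Nat.ceil_pos.2 (Real.exp_pos _)
  have hb1 := sum_average_le (Nat.mul_pos hk2' hk3') <|
    hlow1 _ D1 ⟨fun m1 => isPMF_average hk2' hk3' fun m2 m3 => hQ m1 m2 m3, hD1⟩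
  have hb2 := sum_average_le (Nat.mul_pos hk1' hk3') <|
    hlow2 _ D2 ⟨fun m2 => isPMF_average hk1' hk3' fun m1 m3 => hQ m1 m2 m3, hD2⟩
  have hb3 := sum_average_le (Nat.mul_pos hk1' hk2') <|
    hlow3 _ D3 ⟨fun m3 => isPMF_average hk1' hk2' fun m1 m2 => hQ m1 m2 m3, hD3⟩
  set S : (Fin n → X) → ℝ := fun x => ∑ m1, ∑ m2, ∑ m3, Q m1 m2 m3 x with hS
  have hS2 : ∀ x, ∑ m2, ∑ m1, ∑ m3, Q m1 m2 m3 x = S x := fun x => sum_comm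
  have hS3 : ∀ x, ∑ m3, ∑ m1, ∑ m2, Q m1 m2 m3 x = S x := fun x => by
    rw [sum_comm]
    exact sum_congr rfl fun _ _ => sum_comm
  have hS0 : ∀ x, 0 ≤ S x := fun x =>
    sum_nonneg fun _ _ => sum_nonneg fun _ _ => sum_nonneg fun _ _ => (hQ _ _ _).1 x
  have hStot : ∑ x, S x = (k1 : ℝ) * k2 * k3 := by
    have h : ∀ m1 m2 m3, ∑ x, Q m1 m2 m3 x = 1 := fun m1 m2 m3 => (hQ m1 m2 m3).2
    have h' : ∑ x, S x = ∑ m1, ∑ m2, ∑ m3, ∑ x, Q m1 m2 m3 x := by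
      simp only [hS]
      rw [sum_comm]
      refine sum_congr rfl fun _ _ => ?_
      rw [sum_comm]
      exact sum_congr rfl fun _ _ => sum_comm
    rw [h']
    simp [h, mul_assoc]
  simp only [hS2, hS3] at hb2 hb3
  obtain ⟨x, hx1, hx2, hx3⟩ : ∃ x : Fin n → X, R1 < mutInf (seqType x) (marg1 W) + ε ∧
      R2 < mutInf (seqType x) (marg2 W) + ε ∧ R3 < mutInf (seqType x) (marg3 W) + ε := by
    by_contra! hcover
    have hle : ∑ x, S x
        ≤ ∑ x ∈ univ.filter (fun x : Fin n → X => mutInf (seqType x) (marg1 W) + ε ≤ R1), S x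
        + ∑ x ∈ univ.filter (fun x : Fin n → X => mutInf (seqType x) (marg2 W) + ε ≤ R2), S x
        + ∑ x ∈ univ.filter (fun x : Fin n → X => mutInf (seqType x) (marg3 W) + ε ≤ R3), S x := by
      simp only [sum_filter, ← sum_add_distrib]
      refine sum_le_sum fun x _ => ?_
      have h := hcover x
      have h0 := hS0 x
      split_ifs with h1 h2 h3 h3 h2 h3 h3 <;> first
        | linarith
        | exact absurd (h (not_le.1 h1) (not_le.1 h2)) h3
    have hkpos : (0 : ℝ) < (k1 : ℝ) * k2 * k3 := by positivity
    push_cast at hb1 hb2 hb3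
    have hlt := mul_lt_mul_of_pos_left hδsum hkpos
    linarith
  exact ⟨seqType x, isPMF_seqType hn0 x, hx1, hx2, hx3⟩
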